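/- arXiv:1107.2361 — 2 statements merged into one kernel-verified Lean document; each statement's English description precedes it below -/
import Mathlib

section
/- Let L be a g-symmetric endomorphism of V and let p be a real polynomial with p(L) = 0 (for instance the minimal polynomial of L). Then the alternating bilinear map R(u,v) = D_p(L, u∧v) is a formal curvature tensor on V all of whose values lie in 𝔤_L: it satisfies the Bianchi identity R(u,v)w + R(v,w)u + R(w,u)v = 0 for all u,v,w ∈ V, and each R(u,v) is g-skew-symmetric and commutes with L. -/
/-- The wedge `u ∧ v` of two vectors w.r.t. a bilinear form `g`:
the endomorphism `w ↦ g v w • u - g u w • v`. -/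
noncomputable def wedge {V : Type*} [AddCommGroup V] [Module ℝ V]
    (g : LinearMap.BilinForm ℝ V) (u v : V) : Module.End ℝ V :=
  (g v).smulRight u - (g u).smulRight v

/-- A formal curvature tensor on `V`: an alternating bilinear map
`R : V × V → End(V)` satisfying the Bianchi identity. -/
def IsFormalCurvature {V : Type*} [AddCommGroup V] [Module ℝ V]
    (R : V → V → Module.End ℝ V) : Prop :=
  (∀ u u' v : V, R (u + u') v = R u v + R u' v) ∧
  (∀ (c : ℝ) (u v : V), R (c • u) v = c • R u v) ∧
  (∀ u v v' : V, R u (v + v') = R u v + R u v') ∧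
  (∀ (c : ℝ) (u v : V), R u (c • v) = c • R u v) ∧
  (∀ u : V, R u u = 0) ∧
  (∀ u v w : V, R u v w + R v w u + R w u v = 0)

theorem aux_pow_symm {V : Type*} [AddCommGroup V] [Module ℝ V]
    (g : LinearMap.BilinForm ℝ V) (L : Module.End ℝ V)
    (hL : ∀ u v : V, g (L u) v = g u (L v)) (k : ℕ) :
    ∀ u v : V, g ((L ^ k) u) v = g u ((L ^ k) v) := by
  induction k with
  | zero => intro u v; simp
  | succ k ih =>
    intro u v
    rw [pow_succ, Module.End.mul_apply, ih, hL, ← Module.End.mul_apply L, ← pow_succ', pow_succ]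

theorem aux_comm {V : Type*} [AddCommGroup V] [Module ℝ V]
    (L X : Module.End ℝ V) (m : ℕ) :
    L * (∑ j ∈ Finset.range m, L ^ (m - 1 - j) * X * L ^ j)
      - (∑ j ∈ Finset.range m, L ^ (m - 1 - j) * X * L ^ j) * L = L ^ m * X - X * L ^ m := by
  have h := Finset.sum_range_sub' (fun j => L ^ (m - j) * X * L ^ j) m
  simp only [Nat.sub_zero, pow_zero, mul_one, Nat.sub_self, one_mul] at h
  rw [← h, Finset.mul_sum, Finset.sum_mul, ← Finset.sum_sub_distrib]
  refine Finset.sum_congr rfl fun j hj => ?_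
  have hj := Finset.mem_range.1 hj
  have e1 : m - j = (m - 1 - j) + 1 := by omega
  have e2 : m - (j + 1) = m - 1 - j := by omega
  rw [e1, e2, pow_succ' L (m - 1 - j), pow_succ L j]
  simp only [mul_assoc]

theorem aux_wedge_skew {V : Type*} [AddCommGroup V] [Module ℝ V]
    (g : LinearMap.BilinForm ℝ V) (hg_symm : ∀ u v : V, g u v = g v u) (u v x y : V) :
    g (wedge g u v x) y = - g x (wedge g u v y) := by
  simp [wedge, hg_symm x]
  ring

/-- If `L` is `g`-symmetric and `p` is a real polynomial with `p(L) = 0`,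
then `R(u,v) = D_p(L, u ∧ v)` is a formal curvature tensor on `V` all of whose values
lie in `𝔤_L`: each `R(u,v)` is `g`-skew-symmetric and commutes with `L`. -/
theorem stmt4 (V : Type*) [AddCommGroup V] [Module ℝ V] [FiniteDimensional ℝ V]
    (g : LinearMap.BilinForm ℝ V) (hg_symm : ∀ u v : V, g u v = g v u)
    (hg_nd : g.Nondegenerate)
    (N : ℕ) (a : ℕ → ℝ) (L : Module.End ℝ V)
    (hL : ∀ u v : V, g (L u) v = g u (L v))
    (hpL : ∑ m ∈ Finset.range (N + 1), a m • L ^ m = 0) :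
    IsFormalCurvature (fun u v : V =>
        ∑ m ∈ Finset.range (N + 1), a m •
          ∑ j ∈ Finset.range m, L ^ (m - 1 - j) * wedge g u v * L ^ j) ∧
      ∀ u v : V,
        (∀ x y : V,
          g ((∑ m ∈ Finset.range (N + 1), a m •
                ∑ j ∈ Finset.range m, L ^ (m - 1 - j) * wedge g u v * L ^ j) x) y =
          - g x ((∑ m ∈ Finset.range (N + 1), a m •
                ∑ j ∈ Finset.range m, L ^ (m - 1 - j) * wedge g u v * L ^ j) y)) ∧
        (∑ m ∈ Finset.range (N + 1), a m •
            ∑ j ∈ Finset.range m, L ^ (m - 1 - j) * wedge g u v * L ^ j) * L =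
          L * (∑ m ∈ Finset.range (N + 1), a m •
            ∑ j ∈ Finset.range m, L ^ (m - 1 - j) * wedge g u v * L ^ j) := by
  refine ⟨⟨?_, ?_, ?_, ?_, ?_, ?_⟩, fun u v => ⟨?_, ?_⟩⟩
  · intro u u' v
    have h : wedge g (u + u') v = wedge g u v + wedge g u' v := by
      ext w; simp [wedge, add_smul]; abel
    simp only [h, mul_add, add_mul, Finset.sum_add_distrib, smul_add]
  · intro c u v
    have h : wedge g (c • u) v = c • wedge g u v := by
      ext w; simp [wedge, smul_sub, smul_smul, mul_comm]
    simp only [h, mul_smul_comm, smul_mul_assoc, Finset.smul_sum, smul_comm c]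
  · intro u v v'
    have h : wedge g u (v + v') = wedge g u v + wedge g u v' := by
      ext w; simp [wedge, add_smul]; abel
    simp only [h, mul_add, add_mul, Finset.sum_add_distrib, smul_add]
  · intro c u v
    have h : wedge g u (c • v) = c • wedge g u v := by
      ext w; simp [wedge, smul_sub, smul_smul, mul_comm]
    simp only [h, mul_smul_comm, smul_mul_assoc, Finset.smul_sum, smul_comm c]
  · intro u
    have h : wedge g u u = 0 := by simp [wedge]
    simp [h]
  · intro u v w
    simp only [LinearMap.sum_apply, LinearMap.smul_apply, ← Finset.sum_add_distrib, ← smul_add]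
    refine Finset.sum_eq_zero fun m _ => ?_
    rw [Finset.sum_eq_zero, smul_zero]
    intro j _
    have hs : ∀ x y, g x ((L ^ j) y) = g y ((L ^ j) x) := fun x y => by
      rw [← aux_pow_symm g L hL, hg_symm]
    simp only [Module.End.mul_apply, ← map_add]
    have : wedge g u v ((L ^ j) w) + wedge g v w ((L ^ j) u) + wedge g w u ((L ^ j) v) = 0 := by
      simp only [wedge, LinearMap.sub_apply, LinearMap.smulRight_apply]
      rw [hs v w, hs u w, hs v u]
      abel
    rw [this, map_zero]
  · intro x y
    simp only [LinearMap.sum_apply, LinearMap.smul_apply, map_sum, map_smul, smul_eq_mul]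
    rw [← Finset.sum_neg_distrib]
    refine Finset.sum_congr rfl fun m _ => ?_
    rw [← mul_neg, ← Finset.sum_neg_distrib]
    congr 1
    rw [← Finset.sum_range_reflect]
    refine Finset.sum_congr rfl fun j hj => ?_
    have hj := Finset.mem_range.1 hj
    have e : m - 1 - (m - 1 - j) = j := by omega
    rw [e]
    simp only [Module.End.mul_apply]
    rw [aux_pow_symm g L hL, aux_wedge_skew g hg_symm, aux_pow_symm g L hL]
  · symm
    rw [← sub_eq_zero]
    rw [Finset.mul_sum, Finset.sum_mul, ← Finset.sum_sub_distrib]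
    simp only [mul_smul_comm, smul_mul_assoc, ← smul_sub, aux_comm]
    simp only [smul_sub, Finset.sum_sub_distrib, ← smul_mul_assoc, ← Finset.sum_mul, hpL]
    simp only [smul_mul_assoc, ← mul_smul_comm, ← Finset.mul_sum, hpL]
    simp
end

section
/- Let n₁ ≤ n₂ ≤ ... ≤ n_k be positive integers, let ε₁, ..., ε_k ∈ {1, −1}, let V = ℝ^{n₁+...+n_k}, let L be the block-diagonal matrix diag(J_{n₁}, ..., J_{n_k}), and let g be the nondegenerate symmetric bilinear form with matrix diag(ε₁S_{n₁}, ..., ε_k S_{n_k}). Then the vector space 𝔤_L = {X : X g-skew-symmetric, XL = LX} has dimension Σ_{i=1}^{k} (k − i)·n_i. -/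
open Matrix

abbrev Idx (k : ℕ) (n : Fin k → ℕ) := (i : Fin k) × Fin (n i)

abbrev TT (k : ℕ) (n : Fin k → ℕ) := (i : Fin k) × ({j : Fin k // i < j} × Fin (n i))

lemma card_TT (k : ℕ) (n : Fin k → ℕ) :
    Fintype.card (TT k n) = ∑ i : Fin k, (k - 1 - (i : ℕ)) * n i := by
  rw [Fintype.card_sigma]
  refine Finset.sum_congr rfl fun i _ => ?_
  rw [Fintype.card_prod, Fintype.card_fin, Fintype.card_subtype]
  congr 1
  have : (Finset.univ.filter fun j : Fin k => i < j) = Finset.Ioi i := by ext; simp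
  rw [this, Fin.card_Ioi]

noncomputable def FF {k : ℕ} {n : Fin k → ℕ} (f : TT k n → ℝ) (i j : Fin k) (s : ℕ) : ℝ :=
  if h : i < j ∧ n j ≤ s + 1 ∧ s + 1 - n j < n i then
    f ⟨i, ⟨j, h.1⟩, ⟨s + 1 - n j, h.2.2⟩⟩ else 0

noncomputable def Phi {k : ℕ} {n : Fin k → ℕ} :
    (TT k n → ℝ) →ₗ[ℝ] Matrix (Idx k n) (Idx k n) ℝ where
  toFun f := Matrix.of fun p q =>
    FF f p.1 q.1 ((p.2 : ℕ) + q.2) - FF f q.1 p.1 ((p.2 : ℕ) + q.2)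
  map_add' f g := by
    ext p q
    simp only [FF, Matrix.of_apply, Matrix.add_apply, Pi.add_apply]
    split_ifs <;> ring
  map_smul' c f := by
    ext p q
    simp only [FF, Matrix.of_apply, Matrix.smul_apply, Pi.smul_apply, smul_eq_mul, RingHom.id_apply]
    split_ifs <;> ring

lemma Phi_apply {k : ℕ} {n : Fin k → ℕ} (f : TT k n → ℝ) (p q : Idx k n) :
    Phi f p q = FF f p.1 q.1 ((p.2 : ℕ) + q.2) - FF f q.1 p.1 ((p.2 : ℕ) + q.2) := rfl

lemma FF_zero {k : ℕ} {n : Fin k → ℕ} (hmono : Monotone n) (f : TT k n → ℝ) (i j : Fin k) (s : ℕ)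
    (h : s + 1 < n i ∨ s + 1 < n j) : FF f i j s = 0 := by
  unfold FF
  rw [dif_neg]
  rintro ⟨h1, h2, h3⟩
  have := hmono h1.le
  omega

lemma Phi_diag {k : ℕ} {n : Fin k → ℕ} (f : TT k n → ℝ) (i j : Fin k) (hij : i < j)
    (c : Fin (n i)) (b : Fin (n j)) (hb : (b : ℕ) + 1 = n j) :
    Phi f ⟨i, c⟩ ⟨j, b⟩ = f ⟨i, ⟨j, hij⟩, c⟩ := by
  have hc := c.2
  rw [Phi_apply]
  simp only [FF]
  have e : (c : ℕ) + b + 1 - n j = c := by omega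
  rw [dif_pos ⟨hij, by omega, by omega⟩, dif_neg (fun h => absurd h.1 hij.not_gt), sub_zero]
  congr 3
  exact Fin.ext e

section
variable {k : ℕ} {n : Fin k → ℕ} {L : Matrix (Idx k n) (Idx k n) ℝ}

lemma mulL_zero (hLdef : ∀ p q : Idx k n,
      L p q = if p.1 = q.1 ∧ (q.2 : ℕ) = (p.2 : ℕ) + 1 then 1 else 0)
    (M : Matrix (Idx k n) (Idx k n) ℝ) (p q : Idx k n) (hq : (q.2 : ℕ) = 0) :
    (M * L) p q = 0 := by
  rw [Matrix.mul_apply]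
  refine Finset.sum_eq_zero fun r _ => ?_
  rw [hLdef, if_neg (by omega), mul_zero]

lemma mulL_succ (hLdef : ∀ p q : Idx k n,
      L p q = if p.1 = q.1 ∧ (q.2 : ℕ) = (p.2 : ℕ) + 1 then 1 else 0)
    (M : Matrix (Idx k n) (Idx k n) ℝ) (p : Idx k n) (j : Fin k) (b : ℕ) (hb : b + 1 < n j) :
    (M * L) p ⟨j, ⟨b + 1, hb⟩⟩ = M p ⟨j, ⟨b, by omega⟩⟩ := by
  rw [Matrix.mul_apply, Finset.sum_eq_single ⟨j, ⟨b, by omega⟩⟩]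
  · rw [hLdef, if_pos ⟨rfl, rfl⟩, mul_one]
  · rintro ⟨i, a⟩ _ hne
    rw [hLdef, if_neg, mul_zero]
    rintro ⟨h1, h2⟩
    dsimp only at h1 h2
    subst h1
    apply hne
    congr 1
    ext
    simp only
    omega
  · simp

/-- for antisymmetric matrices, the commutation in Hankel form -/
lemma Phi_hankel (hLdef : ∀ p q : Idx k n,
      L p q = if p.1 = q.1 ∧ (q.2 : ℕ) = (p.2 : ℕ) + 1 then 1 else 0)
    (hmono : Monotone n) (f : TT k n → ℝ) : Phi f * L = Lᵀ * Phi f := by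
  have e : Lᵀ * Phi f = ((Phi f)ᵀ * L)ᵀ := by rw [Matrix.transpose_mul, Matrix.transpose_transpose]
  rw [e]
  ext ⟨i, a, ha⟩ ⟨j, b, hb⟩
  rw [Matrix.transpose_apply]
  rcases a with _ | a <;> rcases b with _ | b
  · rw [mulL_zero hLdef _ _ _ rfl, mulL_zero hLdef _ _ _ rfl]
  · rw [mulL_succ hLdef, mulL_zero hLdef _ _ _ rfl, Phi_apply]
    dsimp only
    rw [FF_zero hmono _ _ _ _ (by omega), FF_zero hmono _ _ _ _ (by omega), sub_zero]
  · rw [mulL_succ hLdef, mulL_zero hLdef _ _ _ rfl, Matrix.transpose_apply, Phi_apply]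
    dsimp only
    rw [FF_zero hmono _ _ _ _ (by omega), FF_zero hmono _ _ _ _ (by omega), sub_zero]
  · rw [mulL_succ hLdef, mulL_succ hLdef, Matrix.transpose_apply, Phi_apply, Phi_apply]
    dsimp only
    rw [show a + 1 + b = a + (b + 1) by omega]

lemma Phi_anti (f : TT k n → ℝ) : (Phi f)ᵀ = - Phi f := by
  ext p q
  rw [Matrix.transpose_apply, Matrix.neg_apply, Phi_apply, Phi_apply, add_comm (q.2 : ℕ)]
  ring

lemma eq_zero_of (hLdef : ∀ p q : Idx k n,
      L p q = if p.1 = q.1 ∧ (q.2 : ℕ) = (p.2 : ℕ) + 1 then 1 else 0)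
    (Y : Matrix (Idx k n) (Idx k n) ℝ) (hanti : Yᵀ = - Y) (hY : Y * L = Lᵀ * Y)
    (h0 : ∀ (i j : Fin k), i < j → ∀ (a : ℕ) (ha : a < n i) (b : ℕ) (hb : b < n j), b + 1 = n j →
      Y ⟨i, ⟨a, ha⟩⟩ ⟨j, ⟨b, hb⟩⟩ = 0) : Y = 0 := by
  have e : Lᵀ * Y = (Yᵀ * L)ᵀ := by rw [Matrix.transpose_mul, Matrix.transpose_transpose]
  rw [e] at hY
  have han : ∀ p q, Y q p = - Y p q := fun p q => congrFun (congrFun hanti p) q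
  have H1 : ∀ (i j : Fin k) (a b : ℕ) (ha : a + 1 < n i) (hb : b + 1 < n j),
      Y ⟨i, ⟨a + 1, ha⟩⟩ ⟨j, ⟨b, by omega⟩⟩ = Y ⟨i, ⟨a, by omega⟩⟩ ⟨j, ⟨b + 1, hb⟩⟩ := by
    intro i j a b ha hb
    have := congrFun (congrFun hY ⟨i, ⟨a + 1, ha⟩⟩) ⟨j, ⟨b + 1, hb⟩⟩
    rwa [Matrix.transpose_apply, mulL_succ hLdef, mulL_succ hLdef] at this
  have H2 : ∀ (i j : Fin k) (b : ℕ) (ha : 0 < n i) (hb : b + 1 < n j),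
      Y ⟨i, ⟨0, ha⟩⟩ ⟨j, ⟨b, by omega⟩⟩ = 0 := by
    intro i j b ha hb
    have := congrFun (congrFun hY ⟨i, ⟨0, ha⟩⟩) ⟨j, ⟨b + 1, hb⟩⟩
    rwa [Matrix.transpose_apply, mulL_succ hLdef, mulL_zero hLdef _ _ _ rfl] at this
  have hlt : ∀ (i j : Fin k), i < j → ∀ (a : ℕ) (ha : a < n i) (b : ℕ) (hb : b < n j),
      Y ⟨i, ⟨a, ha⟩⟩ ⟨j, ⟨b, hb⟩⟩ = 0 := by
    intro i j hij a
    induction a with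
    | zero =>
      intro ha b hb
      by_cases h : b + 1 = n j
      · exact h0 i j hij _ _ _ _ h
      · exact H2 i j b ha (by omega)
    | succ a ih =>
      intro ha b hb
      by_cases h : b + 1 = n j
      · exact h0 i j hij _ _ _ _ h
      · rw [H1 i j a b ha (by omega)]
        exact ih _ _ _
  have hsym : ∀ (i : Fin k) (d a : ℕ) (ha : a + d < n i),
      Y ⟨i, ⟨a + d, ha⟩⟩ ⟨i, ⟨a, by omega⟩⟩ = 0 := by
    intro i d
    induction d using Nat.strong_induction_on with
    | _ d ih =>
      intro a ha
      rcases d with _ | _ | d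
      · have := han ⟨i, ⟨a, ha⟩⟩ ⟨i, ⟨a, ha⟩⟩
        simp only [add_zero]
        linarith
      · have h1 := H1 i i a a (by omega) (by omega)
        have h2 := han ⟨i, ⟨a, by omega⟩⟩ ⟨i, ⟨a + 1, by omega⟩⟩
        simp only [zero_add]
        linarith
      · have h1 := H1 i i (a + d + 1) a (by omega) (by omega)
        have h2 := ih d (by omega) (a + 1) (by omega)
        have e1 : (⟨a + (d + 1 + 1), ha⟩ : Fin (n i)) = ⟨a + d + 1 + 1, by omega⟩ := by
          ext; simp only; omega
        have e2 : (⟨a + 1 + d, by omega⟩ : Fin (n i)) = ⟨a + d + 1, by omega⟩ := by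
          ext; simp only; omega
        rw [e1, h1, ← e2, h2]
  ext ⟨i, a, ha⟩ ⟨j, b, hb⟩
  rw [Matrix.zero_apply]
  rcases lt_trichotomy i j with h | h | h
  · exact hlt i j h _ _ _ _
  · subst h
    rcases le_total b a with h | h
    · obtain ⟨d, rfl⟩ := Nat.exists_eq_add_of_le h
      exact hsym _ _ _ _
    · obtain ⟨d, rfl⟩ := Nat.exists_eq_add_of_le h
      rw [han, hsym, neg_zero]
  · rw [han, hlt j i h, neg_zero]

end

section
variable {k : ℕ} {n : Fin k → ℕ} {L G : Matrix (Idx k n) (Idx k n) ℝ} {ε : Fin k → ℝ}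

lemma G_symm (hGdef : ∀ p q : Idx k n,
      G p q = if p.1 = q.1 ∧ (p.2 : ℕ) + (q.2 : ℕ) + 1 = n p.1 then ε p.1 else 0) : Gᵀ = G := by
  ext ⟨i, a⟩ ⟨j, b⟩
  rw [Matrix.transpose_apply, hGdef, hGdef]
  dsimp only
  by_cases h : i = j
  · subst h
    rw [add_comm (a : ℕ)]
  · rw [if_neg (fun hh => h hh.1.symm), if_neg (fun hh => h hh.1)]

lemma G_sq (hε : ∀ i, ε i = 1 ∨ ε i = -1) (hGdef : ∀ p q : Idx k n,
      G p q = if p.1 = q.1 ∧ (p.2 : ℕ) + (q.2 : ℕ) + 1 = n p.1 then ε p.1 else 0) : G * G = 1 := by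
  ext ⟨i, a⟩ ⟨j, b⟩
  have ha := a.2
  have hb := b.2
  rw [Matrix.mul_apply, Finset.sum_eq_single ⟨i, ⟨n i - 1 - a, by omega⟩⟩]
  · rw [hGdef, hGdef, if_pos ⟨rfl, by dsimp only; omega⟩, Matrix.one_apply]
    dsimp only
    by_cases h : i = j
    · subst h
      by_cases h' : a = b
      · subst h'
        rw [if_pos ⟨rfl, by omega⟩, if_pos rfl]
        rcases hε i with h | h <;> rw [h] <;> norm_num
      · have : (a : ℕ) ≠ b := fun hh => h' (Fin.ext hh)
        rw [if_neg (by omega), if_neg (by simpa using h'), mul_zero]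
    · rw [if_neg (fun hh => h hh.1), if_neg (by simp [h]), mul_zero]
  · rintro ⟨l, c⟩ _ hne
    rw [hGdef, if_neg, zero_mul]
    rintro ⟨h1, h2⟩
    dsimp only at h1 h2
    subst h1
    apply hne
    congr 1
    ext
    simp only
    omega
  · simp

lemma G_L (hLdef : ∀ p q : Idx k n,
      L p q = if p.1 = q.1 ∧ (q.2 : ℕ) = (p.2 : ℕ) + 1 then 1 else 0)
    (hGdef : ∀ p q : Idx k n,
      G p q = if p.1 = q.1 ∧ (p.2 : ℕ) + (q.2 : ℕ) + 1 = n p.1 then ε p.1 else 0) :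
    G * L = Lᵀ * G := by
  have e : Lᵀ * G = (G * L)ᵀ := by rw [Matrix.transpose_mul, G_symm hGdef]
  have key : ∀ p q : Idx k n, (G * L) p q =
      if p.1 = q.1 ∧ (p.2 : ℕ) + (q.2 : ℕ) = n p.1 then ε p.1 else 0 := by
    rintro ⟨i, a, ha⟩ ⟨j, b, hb⟩
    rcases b with _ | b
    · rw [mulL_zero hLdef _ _ _ rfl, if_neg]
      dsimp only
      omega
    · rw [mulL_succ hLdef, hGdef]
      rfl
  rw [e]
  ext ⟨i, a⟩ ⟨j, b⟩
  rw [Matrix.transpose_apply, key, key]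
  dsimp only
  by_cases h : i = j
  · subst h
    rw [add_comm (a : ℕ)]
  · rw [if_neg (fun hh => h hh.1), if_neg (fun hh => h hh.1.symm)]

end

lemma skew_iff {ι : Type*} [Fintype ι] [DecidableEq ι] (X G : Matrix ι ι ℝ) :
    (∀ u v, (X *ᵥ u) ⬝ᵥ (G *ᵥ v) = - u ⬝ᵥ (G *ᵥ (X *ᵥ v))) ↔ Xᵀ * G = - (G * X) := by
  have e1 : ∀ u v, (X *ᵥ u) ⬝ᵥ (G *ᵥ v) = u ⬝ᵥ ((Xᵀ * G) *ᵥ v) := by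
    intro u v
    rw [← Matrix.mulVec_mulVec, Matrix.dotProduct_mulVec u, Matrix.vecMul_transpose]
  have e2 : ∀ u v, - u ⬝ᵥ (G *ᵥ (X *ᵥ v)) = u ⬝ᵥ ((-(G * X)) *ᵥ v) := by
    intro u v
    rw [Matrix.neg_mulVec, Matrix.mulVec_mulVec, neg_dotProduct, dotProduct_neg]
  simp only [e1, e2]
  constructor
  · intro h
    ext i j
    have := h (Pi.single i 1) (Pi.single j 1)
    simpa using this
  · intro h u v
    rw [h]


/-- For `L = diag(J_{n₁}, ..., J_{n_k})` (with `n₁ ≤ ... ≤ n_k` positive)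
and `g` the nondegenerate symmetric bilinear form with matrix
`G = diag(ε₁ S_{n₁}, ..., ε_k S_{n_k})`, `ε i ∈ {1, -1}`, the vector space
`𝔤_L = {X : X g-skew-symmetric, XL = LX}` has dimension `Σ_{i=1}^{k} (k - i)·n_i`. -/
theorem stmt10 (k : ℕ) (n : Fin k → ℕ) (hpos : ∀ i, 0 < n i) (hmono : Monotone n)
    (ε : Fin k → ℝ) (hε : ∀ i, ε i = 1 ∨ ε i = -1)
    (L G : Matrix ((i : Fin k) × Fin (n i)) ((i : Fin k) × Fin (n i)) ℝ)
    (hLdef : ∀ p q : (i : Fin k) × Fin (n i),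
      L p q = if p.1 = q.1 ∧ (q.2 : ℕ) = (p.2 : ℕ) + 1 then 1 else 0)
    (hGdef : ∀ p q : (i : Fin k) × Fin (n i),
      G p q = if p.1 = q.1 ∧ (p.2 : ℕ) + (q.2 : ℕ) + 1 = n p.1 then ε p.1 else 0) :
    Module.finrank ℝ (Submodule.span ℝ
        {X : Matrix ((i : Fin k) × Fin (n i)) ((i : Fin k) × Fin (n i)) ℝ |
          (∀ u v, (X *ᵥ u) ⬝ᵥ (G *ᵥ v) = - u ⬝ᵥ (G *ᵥ (X *ᵥ v))) ∧ X * L = L * X}) =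
      ∑ i : Fin k, (k - 1 - (i : ℕ)) * n i := by
  have hGs : Gᵀ = G := G_symm hGdef
  have hGG : G * G = 1 := G_sq hε hGdef
  have hGL : G * L = Lᵀ * G := G_L hLdef hGdef
  have hLG : L * G = G * Lᵀ := by
    calc L * G = G * (G * L) * G := by rw [← Matrix.mul_assoc G G L, hGG, Matrix.one_mul]
      _ = G * Lᵀ := by
        rw [hGL, Matrix.mul_assoc, Matrix.mul_assoc, hGG, Matrix.mul_one]
  let Ψ : (TT k n → ℝ) →ₗ[ℝ] Matrix (Idx k n) (Idx k n) ℝ :=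
    (LinearMap.mulLeft ℝ G).comp Phi
  have hΨ : ∀ f, Ψ f = G * Phi f := fun f => rfl
  have hinj : Function.Injective Ψ := by
    intro f g hfg
    rw [hΨ, hΨ] at hfg
    have h1 : Phi f = Phi g := by
      have := congrArg (G * ·) hfg
      simpa only [← Matrix.mul_assoc, hGG, Matrix.one_mul] using this
    funext ⟨i, ⟨j, hij⟩, c⟩
    have hj := hpos j
    have hb : n j - 1 + 1 = n j := by omega
    rw [← Phi_diag f i j hij c ⟨n j - 1, by omega⟩ hb, h1,
      Phi_diag g i j hij c ⟨n j - 1, by omega⟩ hb]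
  have hset : {X : Matrix ((i : Fin k) × Fin (n i)) ((i : Fin k) × Fin (n i)) ℝ |
          (∀ u v, (X *ᵥ u) ⬝ᵥ (G *ᵥ v) = - u ⬝ᵥ (G *ᵥ (X *ᵥ v))) ∧ X * L = L * X} =
      (LinearMap.range Ψ : Set (Matrix (Idx k n) (Idx k n) ℝ)) := by
    ext X
    rw [Set.mem_ofPred_eq, skew_iff]
    constructor
    · rintro ⟨h1, h2⟩
      have hanti : (G * X)ᵀ = - (G * X) := by rw [Matrix.transpose_mul, hGs, h1]
      have hcom : (G * X) * L = Lᵀ * (G * X) := by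
        rw [Matrix.mul_assoc, h2, ← Matrix.mul_assoc, hGL, Matrix.mul_assoc]
      let f : TT k n → ℝ := fun t =>
        (G * X) ⟨t.1, t.2.2⟩ ⟨t.2.1.1, ⟨n t.2.1.1 - 1, by have := hpos t.2.1.1; omega⟩⟩
      have hz : G * X - Phi f = 0 := by
        refine eq_zero_of hLdef _ ?_ ?_ ?_
        · rw [Matrix.transpose_sub, hanti, Phi_anti]
          abel
        · rw [Matrix.sub_mul, Matrix.mul_sub, hcom, Phi_hankel hLdef hmono]
        · intro i j hij a ha b hb hbn
          rw [Matrix.sub_apply, Phi_diag f i j hij ⟨a, ha⟩ ⟨b, hb⟩ hbn, sub_eq_zero]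
          have e : (⟨b, hb⟩ : Fin (n j)) = ⟨n j - 1, by omega⟩ := by
            ext; simp only; omega
          rw [e]
      refine ⟨f, ?_⟩
      rw [hΨ, ← sub_eq_zero.mp hz, ← Matrix.mul_assoc, hGG, Matrix.one_mul]
    · rintro ⟨f, rfl⟩
      rw [hΨ]
      constructor
      · rw [Matrix.transpose_mul, hGs, Matrix.mul_assoc, hGG, ← Matrix.mul_assoc, hGG,
          Matrix.mul_one, Matrix.one_mul, Phi_anti]
      · rw [Matrix.mul_assoc, Phi_hankel hLdef hmono, ← Matrix.mul_assoc, ← Matrix.mul_assoc, hLG]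
  rw [hset, Submodule.span_eq, LinearMap.finrank_range_of_inj hinj, Module.finrank_fintype_fun_eq_card,
    card_TT]
end
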